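/- Let k be a field with char k ≠ 2 and z = (z₁,…,z_n) ∈ Hⁿ such that the k-linear map H → Hⁿ, λ ↦ (z_t·λ)_t, is injective. Then for w = (w₁,…,w_n) ∈ Hⁿ the following are equivalent: (i) there exists a nonzero c ∈ k with w_t·adjugate(w_u) = c·(z_t·adjugate(z_u)) for all t, u (i.e. ν₂(w) = c•ν₂(z)); (ii) there exists λ ∈ M₂(k) with det λ ≠ 0 and w_t = z_t·λ for all t. -/

import Mathlib

/-! Stack the rows of `z₁, …, z_n` into a `2n × 2` matrix `Z`, and likewise `w` into `W`. Up to sign and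
order, the entries of `z_t · adjugate (z_u)` are the `2 × 2` minors of `Z`, so the first condition says that the
Plücker coordinates of `W` are `c` times those of `Z` (`minor_eq_of_mul_adjugate`). Injectivity means
that `Z` has rank two, so some pair of rows of `Z` is a basis (`exists_minor_ne_zero`). The matrix `lam`
carrying that pair to the corresponding rows of `W` has determinant `c`, and by Cramer's rule it carries
every row of `Z` to the corresponding row of `W`, because Cramer's coefficients are ratios of
minors. Conversely, `c = det lam` works since `lam * lam.adjugate = det lam • 1`. -/

open Matrix

/-- 2×2 matrices over `k`: the split quaternions, with conjugation `adjugate`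
and norm `det`. -/
abbrev M2 (k : Type*) [Field k] := Matrix (Fin 2) (Fin 2) k

variable {k : Type*} [Field k] {n : ℕ}

/-- A matrix with entries in `H = M₂(k)` is Hermitian if `a_{u,t} = adjugate (a_{t,u})`. -/
def IsHerm (A : Matrix (Fin n) (Fin n) (M2 k)) : Prop :=
  ∀ t u, A u t = (A t u).adjugate

/-- The scalar pairing `⟨A,B⟩` on Hermitian matrices:
`Σ_{t<u} (Q(a_{t,u}+b_{t,u}) − Q(a_{t,u}) − Q(b_{t,u})) + Σ_t r_t s_t`, where
`r_t, s_t` are the scalars on the diagonals. -/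
def jip (A B : Matrix (Fin n) (Fin n) (M2 k)) : k :=
  (∑ p ∈ Finset.univ.filter (fun p : Fin n × Fin n => p.1 < p.2),
      ((A p.1 p.2 + B p.1 p.2).det - (A p.1 p.2).det - (B p.1 p.2).det))
    + ∑ t, (A t t 0 0) * (B t t 0 0)

/-- A nonzero Hermitian matrix `A` has Jordan rank one if `A·B·A = ⟨A,B⟩•A`
for every Hermitian `B`. -/
def JordanRankOne (A : Matrix (Fin n) (Fin n) (M2 k)) : Prop :=
  A ≠ 0 ∧ ∀ B : Matrix (Fin n) (Fin n) (M2 k), IsHerm B → A * B * A = jip A B • A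

/-- `L_A : Hⁿ → Hⁿ`, `(x_u) ↦ (Σ_u a_{t,u}·x_u)_t`, as a `k`-linear map. -/
def LA (A : Matrix (Fin n) (Fin n) (M2 k)) : (Fin n → M2 k) →ₗ[k] (Fin n → M2 k) where
  toFun x := fun t => ∑ u, A t u * x u
  map_add' a b := by
    funext t
    simp [mul_add, Finset.sum_add_distrib]
  map_smul' c a := by
    funext t
    simp [Matrix.mul_smul, Finset.smul_sum]


/-- The `2 × 2` minor of the stacked matrix on row `i` of `z t` and row `j` of `z u`. -/
def rowMinor {k : Type*} [Field k] {n : ℕ} (z : Fin n → M2 k) (t : Fin n) (i : Fin 2)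
    (u : Fin n) (j : Fin 2) : k :=
  z t i 0 * z u j 1 - z t i 1 * z u j 0

lemma minor_eq_of_mul_adjugate {k : Type*} [Field k] {n : ℕ} {z w : Fin n → M2 k} {c : k}
    (h : ∀ t u, w t * (w u).adjugate = c • (z t * (z u).adjugate))
    (t : Fin n) (i : Fin 2) (u : Fin n) (j : Fin 2) :
    rowMinor w t i u j = c * rowMinor z t i u j := by
  have h0 := congrFun (congrFun (h t u) i) 0
  have h1 := congrFun (congrFun (h t u) i) 1
  simp [Matrix.mul_apply, Matrix.adjugate_fin_two] at h0 h1
  unfold rowMinor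
  fin_cases j
  · simp only [Fin.zero_eta]
    linear_combination -h1
  · simp only [Fin.mk_one]
    linear_combination h0

/-- If all minors vanish, each row `(a, b)` gives a vector `(-b, a)` killed by every `z t`. -/
lemma exists_minor_ne_zero {k : Type*} [Field k] {n : ℕ} {z : Fin n → M2 k}
    (hz : Function.Injective (fun lam : M2 k => fun t => z t * lam)) :
    ∃ t i u j, rowMinor z t i u j ≠ 0 := by
  by_contra! hD
  have key (lam : M2 k) (h : ∀ t, z t * lam = 0) : lam = 0 :=
    hz (funext fun t => by simp [h t])
  have hrow (u : Fin n) (j : Fin 2) : z u j 1 = 0 ∧ z u j 0 = 0 := by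
    have h := key !![-z u j 1, 0; z u j 0, 0] fun t => by
      ext i l
      have := hD t i u j
      unfold rowMinor at this
      fin_cases l
      · simp [Matrix.mul_apply]
        linear_combination -this
      · simp [Matrix.mul_apply]
    have h0 := congrFun (congrFun h 0) 0
    have h1 := congrFun (congrFun h 1) 0
    simp at h0 h1
    exact ⟨h0, h1⟩
  refine one_ne_zero (key 1 fun t => ?_)
  ext i l
  fin_cases l
  · simpa using (hrow t i).2
  · simpa using (hrow t i).1

theorem stmt18 (k : Type*) [Field k] (hchar : (2 : k) ≠ 0) (n : ℕ)
    (z w : Fin n → M2 k)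
    (hz : Function.Injective (fun lam : M2 k => fun t => z t * lam)) :
    (∃ c : k, c ≠ 0 ∧ ∀ t u, w t * (w u).adjugate = c • (z t * (z u).adjugate)) ↔
    (∃ lam : M2 k, lam.det ≠ 0 ∧ ∀ t, w t = z t * lam) := by
  constructor
  · rintro ⟨c, hc, h⟩
    obtain ⟨p, i, q, j, hd⟩ := exists_minor_ne_zero hz
    have hm := minor_eq_of_mul_adjugate h
    have hpq := hm p i q j
    -- `lam = B⁻¹ * A`, where `B` and `A` are the chosen pairs of rows of `z` and `w`.
    refine ⟨(rowMinor z p i q j)⁻¹ • (!![z q j 1, -z p i 1; -z q j 0, z p i 0] *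
      !![w p i 0, w p i 1; w q j 0, w q j 1]), ?_, fun r => ?_⟩
    · rw [Matrix.det_smul, Matrix.det_mul, Matrix.det_fin_two_of, Matrix.det_fin_two_of]
      have e1 : z q j 1 * z p i 0 - -z p i 1 * -z q j 0 = rowMinor z p i q j := by
        unfold rowMinor; ring
      have e2 : w p i 0 * w q j 1 - w p i 1 * w q j 0 = c * rowMinor z p i q j := hpq
      rw [e1, e2]
      exact mul_ne_zero (pow_ne_zero _ (inv_ne_zero hd)) (mul_ne_zero hd (mul_ne_zero hc hd))
    -- Cramer's rule for row `s` of `w r` in terms of the two chosen rows.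
    · have cramer (s l : Fin 2) : rowMinor z p i q j * w r s l =
          rowMinor z r s q j * w p i l + rowMinor z p i r s * w q j l := by
        apply mul_left_cancel₀ hc
        have e : c * (rowMinor z p i q j * w r s l) = rowMinor w p i q j * w r s l := by
          rw [hpq]; ring
        have e' : c * (rowMinor z r s q j * w p i l + rowMinor z p i r s * w q j l) =
            rowMinor w r s q j * w p i l + rowMinor w p i r s * w q j l := by
          rw [hm r s q j, hm p i r s]; ring
        rw [e, e']
        unfold rowMinor
        fin_cases l
        · simp only [Fin.zero_eta]; ring
        · simp only [Fin.mk_one]; ring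
      ext s l
      rw [Matrix.mul_smul, Matrix.smul_apply, smul_eq_mul, eq_inv_mul_iff_mul_eq₀ hd, cramer s l]
      unfold rowMinor
      fin_cases l <;> simp [Matrix.mul_apply, Fin.sum_univ_two] <;> ring
  · rintro ⟨lam, hl, h⟩
    refine ⟨lam.det, hl, fun t u => ?_⟩
    rw [h t, h u, Matrix.adjugate_mul_distrib, Matrix.mul_assoc, ← Matrix.mul_assoc lam,
      Matrix.mul_adjugate, Matrix.smul_mul, Matrix.one_mul, Matrix.mul_smul]
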